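/- Let 𝒜 be a unital C*-algebra. Then 𝒜 contains a dense unital *-subalgebra that is an algebraic Baer *-algebra if and only if 𝒜 is an AW*-algebra possessing a central projection h such that h𝒜 is commutative and (1−h)𝒜 is finite dimensional. -/

import Mathlib

/-- A Baer `*`-ring: the right annihilator of every nonempty subset is the principal
right ideal generated by a projection. -/
def IsBaerStarRing (A : Type*) [Mul A] [Zero A] [Star A] : Prop :=
  ∀ S : Set A, S.Nonempty → ∃ f : A, star f = f ∧ f * f = f ∧
    {y : A | ∀ s ∈ S, s * y = 0} = {z : A | ∃ x : A, z = f * x}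

/-!
An algebraic element has only finitely many eigenvalues. In a Baer `*`-algebra, a sequence of
nonzero elements of square zero supported on mutually orthogonal projections would yield, after
rescaling, an element with infinitely many prescribed eigenvalues: when `v n * star (v n)` is a
multiple of a projection `q n`, the eigenvectors are the `q n` and the element is the product of the
Baer projections of the annihilators of all `v n` and of all `q n - v n`. So in an algebraic
Baer `*`-algebra, outside the largest projection `h` whose left ideal has no nonzero element of
square zero, there is no infinite sequence of nonzero orthogonal projections. Hence `1 - h` is a
finite sum of projections with scalar corners and its corner is finite dimensional, while `h` is
central with a commutative corner.

If such an algebra `B` is dense in a C*-algebra, then its finite-dimensional part is closed and `B`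
is approximated only in the commutative part. Spectral cutoffs of elements of `B` then show that
every `y` is a limit of elements `q * y` with `q ∈ B` a projection in the right ideal of `y`, which
allows annihilators to be computed in `B`. Conversely, the projections of an AW*-algebra span a
dense subspace, and under the hypotheses on `h` they lie in a `*`-subalgebra of algebraic elements.
-/

open Polynomial

theorem isBaerStarRing_iff {A : Type*} [SemigroupWithZero A] [Star A] :
    IsBaerStarRing A ↔ ∀ S : Set A, S.Nonempty →
      ∃ f : A, IsStarProjection f ∧ ∀ y, (∀ s ∈ S, s * y = 0) ↔ f * y = y := by
  have range_iff (f : A) (hf : f * f = f) (y : A) : (∃ x, y = f * x) ↔ f * y = y :=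
    ⟨by rintro ⟨x, rfl⟩; rw [← mul_assoc, hf], fun h => ⟨y, h.symm⟩⟩
  refine forall₂_congr fun S _ => exists_congr fun f => ⟨?_, ?_⟩
  · rintro ⟨hstar, hidem, hS⟩
    exact ⟨⟨hidem, hstar⟩, fun y => (Set.ext_iff.1 hS y).trans (range_iff f hidem y)⟩
  · rintro ⟨hf, hS⟩
    exact ⟨hf.isSelfAdjoint, hf.isIdempotentElem, Set.ext fun y =>
      (hS y).trans (range_iff f hf.isIdempotentElem y).symm⟩

theorem IsBaerStarRing.of_forall_isStarProjection_mem {R : Type*} [CommSemiring R] [StarRing R]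
    {A : Type*} [Semiring A] [StarRing A] [Algebra R A] [StarModule R A] (hA : IsBaerStarRing A)
    {B : StarSubalgebra R A} (hB : ∀ e : A, IsStarProjection e → e ∈ B) : IsBaerStarRing B := by
  refine isBaerStarRing_iff.2 fun S hS => ?_
  obtain ⟨f, hf, hann⟩ := isBaerStarRing_iff.1 hA (Subtype.val '' S) (hS.image _)
  refine ⟨⟨f, hB f hf⟩, ⟨Subtype.ext hf.isIdempotentElem, Subtype.ext hf.isSelfAdjoint⟩,
    fun y => ?_⟩
  simpa [Subtype.ext_iff] using hann y

theorem isStarNormal_aeval {A : Type*} [Ring A] [StarRing A] [Algebra ℂ A] [StarModule ℂ A] (a : A)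
    [IsStarNormal a] (p : ℂ[X]) : IsStarNormal (aeval a p) := by
  have hmem : aeval a p ∈ StarAlgebra.adjoin ℂ {a} :=
    Algebra.adjoin_mono Set.subset_union_left (aeval_mem_adjoin_singleton ℂ a)
  have hcomm := mul_comm (star (⟨_, hmem⟩ : StarAlgebra.adjoin ℂ {a})) ⟨_, hmem⟩
  exact ⟨congrArg Subtype.val hcomm⟩

/-- The involution of `A` is proper. In a Baer `*`-ring it always is, and properness is all that
the spectral theory of algebraic elements needs. -/
def HasProperInvolution (A : Type*) [Mul A] [Zero A] [Star A] : Prop :=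
  ∀ x : A, x * star x = 0 → x = 0

theorem IsBaerStarRing.hasProperInvolution {A : Type*} [NonUnitalSemiring A] [StarRing A]
    (hA : IsBaerStarRing A) : HasProperInvolution A := by
  intro w hw
  obtain ⟨f, hf, hfw⟩ := isBaerStarRing_iff.1 hA {w} (Set.singleton_nonempty w)
  have w_mul_f : w * f = 0 := (hfw f).2 hf.isIdempotentElem w rfl
  have f_mul_star : f * star w = star w := (hfw _).1 (by simpa using hw)
  simpa [hf.isSelfAdjoint.star_eq, w_mul_f] using (congrArg star f_mul_star).symm

namespace HasProperInvolution

section Ring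

variable {A : Type*} [Ring A] [StarRing A]

theorem eq_zero_of_star_mul_self (hA : HasProperInvolution A) {x : A} (hx : star x * x = 0) :
    x = 0 :=
  star_eq_zero.1 (hA _ (by rwa [star_star]))

theorem eq_zero_of_isSelfAdjoint_of_isNilpotent (hA : HasProperInvolution A) {a : A}
    (ha : IsSelfAdjoint a) (hnil : IsNilpotent a) : a = 0 := by
  have eq_zero_of_pow_two_pow (n : ℕ) (h : a ^ 2 ^ n = 0) : a = 0 := by
    induction n with
    | zero => simpa using h
    | succ n ih =>
      refine ih (hA _ ?_)
      rwa [(ha.pow _).star_eq, ← pow_two, ← pow_mul, ← pow_succ]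
  obtain ⟨n, hn⟩ := hnil
  exact eq_zero_of_pow_two_pow n (pow_eq_zero_of_le n.lt_two_pow_self.le hn)

theorem eq_zero_of_isStarNormal_of_isNilpotent (hA : HasProperInvolution A) {a : A}
    [IsStarNormal a] (hnil : IsNilpotent a) : a = 0 :=
  hA.eq_zero_of_star_mul_self <| hA.eq_zero_of_isSelfAdjoint_of_isNilpotent
    (.star_mul_self a) (Commute.isNilpotent_mul_left (star_comm_self' a) hnil)

theorem isStarProjection_of_isStarNormal (hA : HasProperInvolution A) {e : A} [IsStarNormal e]
    (he : IsIdempotentElem e) : IsStarProjection e := by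
  have hrange : e * star e * (e * star e) = e * star e := by
    rw [mul_assoc, ← mul_assoc (star e), star_comm_self' e, mul_assoc e, he.star.eq,
      ← mul_assoc, he.eq]
  have hzero : e - e * star e = 0 := by
    apply hA
    rw [star_sub, star_mul, star_star, sub_mul, mul_sub, mul_sub, hrange, ← mul_assoc e e, he.eq,
      mul_assoc e, he.star.eq, sub_self]
  refine ⟨he, ?_⟩
  rw [sub_eq_zero.1 hzero]
  exact .mul_star_self e

end Ring

section SpectralTheorem

variable {A : Type*} [Ring A] [StarRing A] [Algebra ℂ A] [StarModule ℂ A]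

variable (hA : HasProperInvolution A)
include hA

theorem squarefree_minpoly {a : A} [IsStarNormal a] (ha : IsAlgebraic ℂ a) :
    Squarefree (minpoly ℂ a) := by
  refine IsRadical.squarefree (minpoly.ne_zero ha.isIntegral) fun n p hp => ?_
  rw [minpoly.dvd_iff, map_pow] at hp
  have := isStarNormal_aeval a p
  exact minpoly.dvd_iff.2 (hA.eq_zero_of_isStarNormal_of_isNilpotent ⟨n, hp⟩)

theorem aeval_eq_of_eval_eq_on_roots {a : A} [IsStarNormal a] (ha : IsAlgebraic ℂ a) {p q : ℂ[X]}
    (hpq : ∀ z ∈ (minpoly ℂ a).roots, p.eval z = q.eval z) : aeval a p = aeval a q := by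
  rw [← sub_eq_zero, ← map_sub, ← minpoly.dvd_iff]
  rcases eq_or_ne (p - q) 0 with h | h
  · exact h ▸ dvd_zero _
  · have hnodup : (minpoly ℂ a).roots.Nodup :=
      nodup_roots (PerfectField.separable_iff_squarefree.2 (hA.squarefree_minpoly ha))
    refine (IsAlgClosed.splits _).dvd_of_roots_le_roots (minpoly.ne_zero ha.isIntegral) ?_
    refine (Multiset.le_iff_subset hnodup).2 fun z hz => (mem_roots h).2 ?_
    rw [IsRoot.def, eval_sub, hpq z hz, sub_self]

theorem exists_spectral_resolution {a : A} [IsStarNormal a] (ha : IsAlgebraic ℂ a) :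
    ∃ (s : Finset ℂ) (e : ℂ → A),
      (∀ z ∈ s, IsStarProjection (e z) ∧ a * e z = z • e z) ∧ a = ∑ z ∈ s, z • e z := by
  let s := (minpoly ℂ a).roots.toFinset
  have aeval_congr {p q : ℂ[X]} (hpq : ∀ z ∈ s, p.eval z = q.eval z) : aeval a p = aeval a q :=
    hA.aeval_eq_of_eval_eq_on_roots ha fun z hz => hpq z (Multiset.mem_toFinset.2 hz)
  have eval_basis (z w : ℂ) (hw : w ∈ s) :
      (Lagrange.basis s id z).eval w = if w = z then 1 else 0 := by
    split_ifs with h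
    · exact h ▸ Lagrange.eval_basis_self (v := id) (Set.injOn_id _) hw
    · exact Lagrange.eval_basis_of_ne (v := id) (Ne.symm h) hw
  refine ⟨s, fun z => aeval a (Lagrange.basis s id z), fun z _ => ⟨?_, ?_⟩, ?_⟩
  · have := isStarNormal_aeval a (Lagrange.basis s id z)
    refine hA.isStarProjection_of_isStarNormal ?_
    rw [IsIdempotentElem, ← map_mul]
    refine aeval_congr fun w hw => ?_
    simp [eval_basis z w hw]
  · suffices aeval a (X * Lagrange.basis s id z) = aeval a (z • Lagrange.basis s id z) by
      rwa [map_mul, aeval_X, map_smul] at this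
    refine aeval_congr fun w hw => ?_
    rw [eval_mul, eval_X, eval_smul, eval_basis z w hw]
    split_ifs with h <;> simp [h]
  · simp only [← map_smul, ← map_sum]
    conv_lhs => rw [← aeval_X (R := ℂ) a]
    refine aeval_congr fun w hw => ?_
    rw [eval_X, eval_finsetSum, Finset.sum_congr rfl fun z _ => by
      rw [eval_smul, eval_basis z w hw]]
    simp [hw]

end SpectralTheorem

end HasProperInvolution

/-! ### The structure of algebraic Baer `*`-algebras -/

section AlgebraicBaer

variable {A : Type*} [Ring A] [StarRing A] [Algebra ℂ A] [StarModule ℂ A]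

theorem HasProperInvolution.exists_eigenprojection (hA : HasProperInvolution A) {a : A}
    (ha : IsSelfAdjoint a) (halg : IsAlgebraic ℂ a) (ha0 : a ≠ 0) :
    ∃ (l : ℝ) (q : A), l ≠ 0 ∧ q ≠ 0 ∧ IsStarProjection q ∧ a * q = (l : ℂ) • q := by
  have := ha.isStarNormal
  obtain ⟨s, e, he, hsum⟩ := hA.exists_spectral_resolution halg
  obtain ⟨z, hz, hze⟩ := Finset.exists_ne_zero_of_sum_ne_zero (hsum ▸ ha0)
  obtain ⟨hproj, heig⟩ := he z hz
  have hz0 : z ≠ 0 := left_ne_zero_of_smul hze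
  have he0 : e z ≠ 0 := right_ne_zero_of_smul hze
  have hcompress : e z * (a * e z) = z • e z := by
    rw [heig, mul_smul_comm, hproj.isIdempotentElem.eq]
  have hconj : star z = z := by
    refine smul_left_injective ℂ he0 ?_
    calc star z • e z = star (e z * (a * e z)) := by
          rw [hcompress, star_smul, hproj.isSelfAdjoint.star_eq]
      _ = e z * (a * e z) := by
          simp only [star_mul, ha.star_eq, hproj.isSelfAdjoint.star_eq, mul_assoc]
      _ = z • e z := hcompress
  obtain ⟨l, rfl⟩ := Complex.conj_eq_iff_real.1 hconj
  exact ⟨l, e l, by simpa using hz0, he0, hproj, heig⟩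

theorem HasProperInvolution.mem_span_isStarProjection (hA : HasProperInvolution A) {a : A}
    [IsStarNormal a] (ha : IsAlgebraic ℂ a) :
    a ∈ Submodule.span ℂ {e : A | IsStarProjection e ∧ ∃ b, e = a * b} := by
  obtain ⟨s, e, he, hsum⟩ := hA.exists_spectral_resolution ha
  have hmem : ∑ z ∈ s, z • e z ∈
      Submodule.span ℂ {e : A | IsStarProjection e ∧ ∃ b, e = a * b} := by
    refine Submodule.sum_mem _ fun z hz => ?_
    rcases eq_or_ne z 0 with rfl | hz0
    · simp
    · obtain ⟨hproj, heig⟩ := he z hz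
      refine Submodule.smul_mem _ _ (Submodule.subset_span ⟨hproj, z⁻¹ • e z, ?_⟩)
      rw [mul_smul_comm, heig, inv_smul_smul₀ hz0]
  rwa [← hsum] at hmem

theorem HasProperInvolution.corner_mem_span_isStarProjection (hA : HasProperInvolution A)
    (halg : ∀ x : A, IsAlgebraic ℂ x) {q : A} (hq : IsStarProjection q) (x : A) :
    q * x * q ∈ Submodule.span ℂ {e : A | IsStarProjection e ∧ q * e = e} := by
  have hx : x ∈ Submodule.span ℂ (selfAdjoint A : Set A) := by simp [span_selfAdjoint]
  induction hx using Submodule.span_induction with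
  | mem a ha =>
    have hqa : IsSelfAdjoint (q * a * q) := by
      simpa [hq.isSelfAdjoint.star_eq] using IsSelfAdjoint.conjugate ha q
    have := hqa.isStarNormal
    refine Submodule.span_mono ?_ (hA.mem_span_isStarProjection (halg (q * a * q)))
    rintro _ ⟨he, b, rfl⟩
    exact ⟨he, by simp only [← mul_assoc, hq.isIdempotentElem.eq]⟩
  | zero => simp
  | add x y _ _ hx hy => simpa only [mul_add, add_mul] using Submodule.add_mem _ hx hy
  | smul c x _ hx => simpa only [mul_smul_comm, smul_mul_assoc] using Submodule.smul_mem _ c hx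

theorem finite_setOf_mul_eq_smul {K R : Type*} [Field K] [Ring R] [Algebra K R] {x : R}
    (hx : IsAlgebraic K x) : {c : K | ∃ y ≠ 0, x * y = c • y}.Finite := by
  obtain ⟨p, hp, hpx⟩ := hx
  refine (p.rootSet_finite K).subset ?_
  rintro c ⟨y, hy, hxy⟩
  refine (mem_rootSet_of_ne hp).2 ?_
  have heig : (Algebra.lmul K R x).HasEigenvector c y :=
    ⟨Module.End.mem_eigenspace_iff.2 hxy, hy⟩
  have hzero := Module.End.aeval_apply_of_hasEigenvector heig (p := p)
  rw [aeval_algHom_apply, hpx, map_zero, LinearMap.zero_apply] at hzero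
  simpa [hy] using hzero.symm

theorem IsBaerStarRing.exists_forall_smul_mul_eq_smul {K R : Type*} [CommRing K] [Ring R]
    [StarRing R] [Algebra K R] (hR : IsBaerStarRing R) {q v : ℕ → R} {s : ℕ → K}
    (hq : ∀ n, IsStarProjection (q n)) (hqq : Pairwise fun n m => q n * q m = 0)
    (hvq : ∀ n m, v n * q m = 0) (hvv : ∀ n, v n * star (v n) = s n • q n)
    (hvv' : Pairwise fun n m => v n * star (v m) = 0) :
    ∃ x, ∀ n, (s n + 1) • (x * q n) = s n • q n := by
  obtain ⟨e, he, hev⟩ := isBaerStarRing_iff.1 hR (Set.range v) (Set.range_nonempty v)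
  obtain ⟨f, hf, hfq⟩ := isBaerStarRing_iff.1 hR (Set.range fun n => q n - v n)
    (Set.range_nonempty _)
  simp only [Set.forall_mem_range] at hev hfq
  have e_mul_star (n) : e * star (v n) = 0 := by
    simpa [he.isSelfAdjoint.star_eq] using
      congrArg star ((hev e).2 he.isIdempotentElem n)
  have e_mul_q (n) : e * q n = q n := (hev _).1 fun m => hvq m n
  have q_mul_star (n m) : q n * star (v m) = 0 := by
    simpa [(hq n).isSelfAdjoint.star_eq] using congrArg star (hvq m n)
  have f_mul_q (n) : f * q n = f * star (v n) := by
    have h := congrArg star ((hfq f).2 hf.isIdempotentElem n)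
    simpa [sub_mul, mul_sub, hf.isSelfAdjoint.star_eq, (hq n).isSelfAdjoint.star_eq,
      sub_eq_zero] using h
  have f_mul_add (n) : f * (s n • q n + star (v n)) = s n • q n + star (v n) := by
    refine (hfq _).1 fun m => ?_
    rw [sub_mul, mul_add, mul_add, mul_smul_comm, mul_smul_comm, q_mul_star, hvq, smul_zero,
      add_zero, zero_add]
    rcases eq_or_ne m n with rfl | hmn
    · rw [(hq m).isIdempotentElem.eq, hvv, sub_self]
    · rw [hqq hmn, hvv' hmn, smul_zero, sub_self]
  refine ⟨e * f, fun n => ?_⟩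
  calc (s n + 1) • (e * f * q n) = e * (f * (s n • q n + star (v n))) := by
        rw [mul_add f, ← f_mul_q, mul_smul_comm, add_smul, one_smul, mul_add, mul_smul_comm,
          mul_assoc]
    _ = s n • q n := by rw [f_mul_add, mul_add, mul_smul_comm, e_mul_q, e_mul_star, add_zero]

theorem HasProperInvolution.exists_mul_star_eq_smul (hA : HasProperInvolution A)
    (halg : ∀ x : A, IsAlgebraic ℂ x) {w : A} (hw : w ≠ 0) {r : ℝ} (hr : 0 < r) :
    ∃ (s : ℝ) (x b : A), |s| = r ∧ w * b ≠ 0 ∧ IsStarProjection (w * b) ∧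
      x * w * star (x * w) = (s : ℂ) • (w * b) := by
  obtain ⟨l, q, hl, hq0, hq, hlq⟩ := hA.exists_eigenprojection (.mul_star_self w) (halg _)
    fun h => hw (hA w h)
  have hqw : w * ((l : ℂ)⁻¹ • (star w * q)) = q := by
    rw [mul_smul_comm, ← mul_assoc, hlq, inv_smul_smul₀ (by exact_mod_cast hl)]
  let c : ℝ := √(r / |l|)
  have hc : c * c = r / |l| := Real.mul_self_sqrt (by positivity)
  refine ⟨c * c * l, (c : ℂ) • q, (l : ℂ)⁻¹ • (star w * q), ?_, ?_, ?_, ?_⟩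
  · rw [hc, abs_mul, abs_of_nonneg (by positivity), div_mul_cancel₀ _ (abs_ne_zero.2 hl)]
  · rwa [hqw]
  · rwa [hqw]
  · rw [hqw]
    calc (c : ℂ) • q * w * star ((c : ℂ) • q * w)
        = ((c : ℂ) * c) • (q * (w * star w * q)) := by
          simp only [star_mul, star_smul, hq.isSelfAdjoint.star_eq, smul_mul_assoc,
            mul_smul_comm, smul_smul, mul_assoc, Complex.star_def, Complex.conj_ofReal]
      _ = ((c * c * l : ℝ) : ℂ) • q := by
          rw [hlq, mul_smul_comm, hq.isIdempotentElem.eq, smul_smul]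
          push_cast
          rfl

theorem IsBaerStarRing.exists_eq_zero_of_orthogonal_of_mul_eq_zero (hA : IsBaerStarRing A)
    (halg : ∀ x : A, IsAlgebraic ℂ x) {w : ℕ → A} (hww : ∀ n m, w n * w m = 0)
    (hright : Pairwise fun n m => w n * star (w m) = 0)
    (hleft : Pairwise fun n m => star (w n) * w m = 0) : ∃ n, w n = 0 := by
  by_contra! hw
  choose s x b hs hq0 hq hxw using fun n : ℕ =>
    hA.hasProperInvolution.exists_mul_star_eq_smul halg (hw n) (r := n + 2) (by positivity)
  have hqq : Pairwise fun n m => w n * b n * (w m * b m) = 0 := fun n m hnm => by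
    change w n * b n * (w m * b m) = 0
    rw [← (hq n).isSelfAdjoint.star_eq, star_mul, mul_assoc, ← mul_assoc (star (w n)), hleft hnm,
      zero_mul, mul_zero]
  have hvq (n m) : x n * w n * (w m * b m) = 0 := by
    rw [mul_assoc, ← mul_assoc (w n), hww, zero_mul, mul_zero]
  have hvv : Pairwise fun n m => x n * w n * star (x m * w m) = 0 := fun n m hnm => by
    change x n * w n * star (x m * w m) = 0
    rw [star_mul, mul_assoc, ← mul_assoc (w n), hright hnm, zero_mul, mul_zero]
  obtain ⟨y, hy⟩ := hA.exists_forall_smul_mul_eq_smul hq hqq hvq hxw hvv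
  have s_add_one_ne_zero (n) : (s n : ℂ) + 1 ≠ 0 := by
    intro h
    have hsn : s n = -1 := by exact_mod_cast eq_neg_of_add_eq_zero_left h
    have := hs n
    rw [hsn, abs_neg, abs_one] at this
    linarith [n.cast_nonneg (α := ℝ)]
  have s_injective : Function.Injective s := fun n m h => by
    have := (hs n).symm.trans ((congrArg abs h).trans (hs m))
    exact_mod_cast add_right_cancel this
  have eigenvalue_injective : Function.Injective fun n => (s n : ℂ) / (s n + 1) := fun n m h => by
    rw [div_eq_div_iff (s_add_one_ne_zero n) (s_add_one_ne_zero m)] at h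
    exact s_injective (by exact_mod_cast (by linear_combination h : (s n : ℂ) = s m))
  refine Set.infinite_range_of_injective eigenvalue_injective
    ((finite_setOf_mul_eq_smul (halg y)).subset ?_)
  rintro _ ⟨n, rfl⟩
  refine ⟨w n * b n, hq0 n, ?_⟩
  change y * (w n * b n) = ((s n : ℂ) / (s n + 1)) • (w n * b n)
  rw [div_eq_inv_mul, mul_smul, ← hy, inv_smul_smul₀ (s_add_one_ne_zero n)]

theorem IsBaerStarRing.exists_link_eq_zero (hA : IsBaerStarRing A)
    (halg : ∀ x : A, IsAlgebraic ℂ x) {d : ℕ → A} (hd : ∀ n, IsStarProjection (d n))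
    (hdd : Pairwise fun n m => d n * d m = 0) (x : ℕ → A) :
    ∃ n, d (2 * n) * x n * d (2 * n + 1) = 0 := by
  have hdd' {n m : ℕ} (hnm : n ≠ m) : d n * d m = 0 := hdd hnm
  apply hA.exists_eq_zero_of_orthogonal_of_mul_eq_zero halg
  · intro n m
    simp only [mul_assoc]
    rw [← mul_assoc (d (2 * n + 1)), hdd' (by lia), zero_mul, mul_zero, mul_zero]
  · intro n m hnm
    simp only [star_mul, (hd _).isSelfAdjoint.star_eq, mul_assoc]
    rw [← mul_assoc (d (2 * n + 1)), hdd' (by lia), zero_mul, mul_zero, mul_zero]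
  · intro n m hnm
    simp only [star_mul, (hd _).isSelfAdjoint.star_eq, mul_assoc]
    rw [← mul_assoc (d (2 * n)), hdd' (by lia), zero_mul, mul_zero, mul_zero]

theorem IsBaerStarRing.exists_eq_zero_of_corner_eq_zero (hA : IsBaerStarRing A)
    (halg : ∀ x : A, IsAlgebraic ℂ x) {d v : ℕ → A} (hd : ∀ n, IsStarProjection (d n))
    (hcorner : Pairwise fun n m => ∀ x, d n * x * d m = 0) (hvv : ∀ n, v n * v n = 0)
    (hvd : ∀ n, v n * d n = v n) : ∃ n, v n = 0 := by
  have hdv (n) : d n * star (v n) = star (v n) := by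
    simpa [(hd n).isSelfAdjoint.star_eq] using congrArg star (hvd n)
  apply hA.exists_eq_zero_of_orthogonal_of_mul_eq_zero halg
  · intro n m
    rcases eq_or_ne n m with rfl | hnm
    · exact hvv n
    · rw [← hvd n, ← hvd m, mul_assoc, ← mul_assoc (d n), hcorner hnm, mul_zero]
  · intro n m hnm
    have hdd : d n * d m = 0 := by simpa using hcorner hnm 1
    change v n * star (v m) = 0
    rw [← hvd n, ← hdv m, mul_assoc, ← mul_assoc (d n), hdd, zero_mul, mul_zero]
  · intro n m hnm
    rw [← hdv n, ← hvd m, ← mul_assoc, mul_assoc (d n), hcorner hnm]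

theorem IsBaerStarRing.exists_eq_zero_of_orthogonal_of_mul_self_eq_zero (hA : IsBaerStarRing A)
    (halg : ∀ x : A, IsAlgebraic ℂ x) {d v : ℕ → A} (hd : ∀ n, IsStarProjection (d n))
    (hdd : Pairwise fun n m => d n * d m = 0) (hvv : ∀ n, v n * v n = 0)
    (hvd : ∀ n, v n * d n = v n) : ∃ n, v n = 0 := by
  obtain ⟨g, hlinked | hunlinked⟩ :=
    exists_increasing_or_nonincreasing_subseq' (fun n m => ∃ x, d n * x * d m ≠ 0) id
  · choose x hx using hlinked
    obtain ⟨n, hn⟩ := hA.exists_link_eq_zero halg (fun n => hd (g n))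
      (hdd.comp_of_injective g.injective) fun n => x (2 * n)
    exact absurd hn (hx (2 * n))
  · have hcorner : Pairwise fun n m => ∀ x, d (g n) * x * d (g m) = 0 := fun n m hnm x => by
      push Not at hunlinked
      rcases hnm.lt_or_gt with h | h
      · exact hunlinked n m h x
      · simpa [(hd _).isSelfAdjoint.star_eq, mul_assoc] using
          congrArg star (hunlinked m n h (star x))
    obtain ⟨n, hn⟩ := hA.exists_eq_zero_of_corner_eq_zero halg (fun n => hd (g n)) hcorner
      (fun n => hvv (g n)) fun n => hvd (g n)
    exact ⟨g n, hn⟩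

/-- A projection whose left ideal contains no nonzero element of square zero. Such a projection is
central and, in an algebraic `*`-algebra with proper involution, cuts out a commutative corner. -/
structure IsReducedProjection {R : Type*} [Mul R] [Zero R] [Star R] (e : R) : Prop
    extends IsStarProjection e where
  eq_zero_of_mul_self : ∀ x, x * x = 0 → x * e = x → x = 0

namespace IsReducedProjection

variable {R : Type*} [Ring R] [StarRing R] {e : R}

theorem commute (he : IsReducedProjection e) (x : R) : Commute e x := by
  have mul_eq_corner (y : R) : y * e = e * y * e := by
    have hsq : (1 - e) * y * e * ((1 - e) * y * e) = 0 := by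
      rw [mul_assoc, ← mul_assoc e, ← mul_assoc e, he.mul_one_sub_self, zero_mul, zero_mul,
        mul_zero]
    have hzero := he.eq_zero_of_mul_self _ hsq (by rw [mul_assoc, he.isIdempotentElem.eq])
    rwa [mul_assoc, sub_mul, one_mul, sub_eq_zero, ← mul_assoc] at hzero
  have hstar : e * x = e * x * e := by
    simpa [he.isSelfAdjoint.star_eq, mul_assoc] using congrArg star (mul_eq_corner (star x))
  exact hstar.trans (mul_eq_corner x).symm

theorem of_mul_eq (he : IsReducedProjection e) {d : R} (hd : IsStarProjection d)
    (hed : e * d = d) : IsReducedProjection d where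
  toIsStarProjection := hd
  eq_zero_of_mul_self x hx hxd := he.eq_zero_of_mul_self x hx <| by
    rw [← hxd, mul_assoc, ← (he.commute d).eq, hed]

theorem commute_mul [Algebra ℂ R] [StarModule ℂ R] (hR : HasProperInvolution R)
    (halg : ∀ x : R, IsAlgebraic ℂ x) (he : IsReducedProjection e) (x y : R) :
    Commute (e * x) y := by
  have hcorner : e * x = e * x * e := by
    rw [mul_assoc, ← (he.commute x).eq, ← mul_assoc, he.isIdempotentElem.eq]
  have hmem := hR.corner_mem_span_isStarProjection halg he.toIsStarProjection x
  rw [← hcorner] at hmem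
  generalize e * x = z at hmem
  induction hmem using Submodule.span_induction with
  | mem d hd => exact (he.of_mul_eq hd.1 hd.2).commute y
  | zero => exact Commute.zero_left y
  | add a b _ _ ha hb => exact ha.add_left hb
  | smul c a _ ha => exact ha.smul_left c

end IsReducedProjection

theorem IsBaerStarRing.exists_largest_isReducedProjection {R : Type*} [Ring R] [StarRing R]
    (hR : IsBaerStarRing R) :
    ∃ h : R, IsReducedProjection h ∧ ∀ d, IsReducedProjection d → h * d = d := by
  obtain ⟨h, hproj, hann⟩ := isBaerStarRing_iff.1 hR {w | w * w = 0} ⟨0, zero_mul 0⟩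
  refine ⟨h, ⟨hproj, fun x hx hxh => ?_⟩, fun d hd => ?_⟩
  · rw [← hxh]
    exact (hann h).2 hproj.isIdempotentElem x hx
  · refine (hann d).1 fun w (hw : w * w = 0) => hd.eq_zero_of_mul_self _ ?_ ?_
    · rw [mul_assoc, ← mul_assoc d, (hd.commute w).eq, mul_assoc w, ← mul_assoc w w, hw, zero_mul]
    · rw [mul_assoc, hd.isIdempotentElem.eq]

/-- Every orthogonal sequence of projections below `p` contains `0`: the finiteness condition that
forces the corner of `p` to be finite-dimensional. -/
def IsOrthogonallyFinite {R : Type*} [Mul R] [Zero R] [Star R] (p : R) : Prop :=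
  ∀ d : ℕ → R, (∀ n, IsStarProjection (d n)) → (∀ n, p * d n = d n) →
    (Pairwise fun n m => d n * d m = 0) → ∃ n, d n = 0

theorem IsBaerStarRing.isOrthogonallyFinite_one_sub (hA : IsBaerStarRing A)
    (halg : ∀ x : A, IsAlgebraic ℂ x) {h : A} (hproj : IsStarProjection h)
    (hmax : ∀ d, IsReducedProjection d → h * d = d) : IsOrthogonallyFinite (1 - h) := by
  intro d hd hhd hdd
  by_contra! hd0
  have exists_sq_zero (n) : ∃ v, v * v = 0 ∧ v * d n = v ∧ v ≠ 0 := by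
    by_contra! hred
    refine hd0 n ?_
    rw [← hhd n, ← hmax _ ⟨hd n, hred⟩, ← mul_assoc, hproj.one_sub_mul_self, zero_mul]
  choose v hvv hvd hv0 using exists_sq_zero
  obtain ⟨n, hn⟩ := hA.exists_eq_zero_of_orthogonal_of_mul_self_eq_zero halg hd hdd hvv hvd
  exact hv0 n hn

theorem IsOrthogonallyFinite.wellFounded {R : Type*} [Ring R] [StarRing R] {p : R}
    (hp : IsOrthogonallyFinite p) :
    WellFounded fun r s : {e : R // IsStarProjection e ∧ p * e = e} =>
      (s : R) * r = r ∧ r ≠ s := by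
  refine wellFounded_iff_isEmpty_descending_chain.2 ⟨fun ⟨r, hr⟩ => ?_⟩
  have mul_eq {n m : ℕ} (hnm : n ≤ m) : (r n : R) * r m = r m := by
    induction m, hnm using Nat.le_induction with
    | base => exact (r n).2.1.isIdempotentElem
    | succ m _ ih => rw [← (hr m).1, ← mul_assoc, ih]
  let d (n : ℕ) : R := r n - r (n + 1)
  have hd (n) : IsStarProjection (d n) :=
    (r (n + 1)).2.1.sub_of_mul_eq_right (r n).2.1 (hr n).1
  have mul_eq_zero_of_lt {n m : ℕ} (hnm : n < m) : d n * d m = 0 := by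
    simp only [d, sub_mul, mul_sub]
    rw [mul_eq hnm.le, mul_eq (n := n + 1) hnm, mul_eq (n := n) (by lia),
      mul_eq (n := n + 1) (by lia), sub_self, sub_self, sub_self]
  have hdd : Pairwise fun n m => d n * d m = 0 := fun n m hnm => by
    rcases hnm.lt_or_gt with h | h
    · exact mul_eq_zero_of_lt h
    · simpa [(hd _).isSelfAdjoint.star_eq] using congrArg star (mul_eq_zero_of_lt h)
  obtain ⟨n, hn⟩ := hp d hd (fun n => by simp only [d, mul_sub, (r _).2.2]) hdd
  exact (hr n).2 (Subtype.ext (sub_eq_zero.1 hn).symm)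

/-- A projection whose corner consists of scalars. The nonzero ones are the atoms of the projection
lattice; `0` is allowed. -/
structure IsScalarProjection {R : Type*} [Ring R] [Star R] [Algebra ℂ R] (e : R) : Prop
    extends IsStarProjection e where
  exists_smul : ∀ x, ∃ c : ℂ, e * x * e = c • e

theorem HasProperInvolution.isScalarProjection_of_minimal (hA : HasProperInvolution A)
    (halg : ∀ x : A, IsAlgebraic ℂ x) {e : A} (he : IsStarProjection e)
    (hmin : ∀ r, IsStarProjection r → e * r = r → r ≠ e → r = 0) : IsScalarProjection e := by
  refine ⟨he, fun x => ?_⟩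
  have hle : Submodule.span ℂ {r : A | IsStarProjection r ∧ e * r = r} ≤ Submodule.span ℂ {e} := by
    refine Submodule.span_le.2 ?_
    rintro r ⟨hr, her⟩
    by_cases hre : r = e
    · exact hre ▸ Submodule.mem_span_singleton_self r
    · exact hmin r hr her hre ▸ zero_mem _
  obtain ⟨c, hc⟩ := Submodule.mem_span_singleton.1
    (hle (hA.corner_mem_span_isStarProjection halg he x))
  exact ⟨c, hc.symm⟩

theorem IsOrthogonallyFinite.mem_span_isScalarProjection {p : A} (hfin : IsOrthogonallyFinite p)
    (hA : HasProperInvolution A) (halg : ∀ x : A, IsAlgebraic ℂ x) (hp : IsStarProjection p) :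
    p ∈ Submodule.span ℂ {e : A | IsScalarProjection e} := by
  suffices ∀ q : {e : A // IsStarProjection e ∧ p * e = e},
      (q : A) ∈ Submodule.span ℂ {e : A | IsScalarProjection e} from
    this ⟨p, hp, hp.isIdempotentElem⟩
  intro q
  induction q using hfin.wellFounded.induction with
  | h q ih =>
    obtain ⟨q, hq, hpq⟩ := q
    by_cases hmin : ∀ r, IsStarProjection r → q * r = r → r ≠ q → r = 0
    · exact Submodule.subset_span (hA.isScalarProjection_of_minimal halg hq hmin)
    · push Not at hmin
      obtain ⟨r, hr, hqr, hrq, hr0⟩ := hmin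
      have hpr : p * r = r := by rw [← hqr, ← mul_assoc, hpq]
      have hr_mem := ih ⟨r, hr, hpr⟩ ⟨hqr, by simpa using hrq⟩
      have hqr_mem := ih ⟨q - r, hr.sub_of_mul_eq_right hq hqr, by rw [mul_sub, hpq, hpr]⟩
        ⟨by simp only [mul_sub, hq.isIdempotentElem.eq, hqr], by simpa using hr0⟩
      simpa using Submodule.add_mem _ hr_mem hqr_mem

theorem IsScalarProjection.exists_forall_mul_mul_eq_smul {R : Type*} [Ring R] [StarRing R]
    [Algebra ℂ R] (hR : HasProperInvolution R) {e f : R}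
    (he : IsScalarProjection e) (hf : IsScalarProjection f) :
    ∃ b : R, ∀ x, ∃ c : ℂ, e * x * f = c • b := by
  by_cases hzero : ∀ x, e * x * f = 0
  · exact ⟨0, fun x => ⟨0, by simp [hzero]⟩⟩
  push Not at hzero
  obtain ⟨x₀, hx₀⟩ := hzero
  have hstar : star (e * x₀ * f) = f * star x₀ * e := by
    simp only [star_mul, he.isSelfAdjoint.star_eq, hf.isSelfAdjoint.star_eq, mul_assoc]
  obtain ⟨l, hl⟩ := hf.exists_smul (star x₀ * e * x₀)
  have star_mul_self : star (e * x₀ * f) * (e * x₀ * f) = l • f := by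
    rw [hstar, ← hl]
    simp only [mul_assoc]
    rw [← mul_assoc e e, he.isIdempotentElem.eq]
  have hl0 : l ≠ 0 := by
    rintro rfl
    exact hx₀ (hR.eq_zero_of_star_mul_self (by rw [star_mul_self, zero_smul]))
  refine ⟨e * x₀ * f, fun x => ?_⟩
  obtain ⟨c, hc⟩ := he.exists_smul (x * f * star x₀)
  refine ⟨l⁻¹ * c, ?_⟩
  calc e * x * f = l⁻¹ • (e * x * (l • f)) := by rw [mul_smul_comm, inv_smul_smul₀ hl0]
    _ = l⁻¹ • (e * (x * f * star x₀) * e * (x₀ * f)) := by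
        rw [← star_mul_self, hstar]
        simp only [mul_assoc]
        rw [← mul_assoc e e, he.isIdempotentElem.eq]
    _ = (l⁻¹ * c) • (e * x₀ * f) := by rw [hc, smul_mul_assoc, smul_smul, mul_assoc]

theorem HasProperInvolution.hasFiniteRange_mulLeft_comp_mulRight {R : Type*} [Ring R]
    [StarRing R] [Algebra ℂ R] (hR : HasProperInvolution R) {a b : R}
    (ha : a ∈ Submodule.span ℂ {e : R | IsScalarProjection e})
    (hb : b ∈ Submodule.span ℂ {e : R | IsScalarProjection e}) :
    (LinearMap.mulLeft ℂ a ∘ₗ LinearMap.mulRight ℂ b).HasFiniteRange := by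
  induction ha, hb using Submodule.span_induction₂ with
  | mem_mem e f he hf =>
    obtain ⟨y, hy⟩ := IsScalarProjection.exists_forall_mul_mul_eq_smul hR he hf
    have hle : LinearMap.range (LinearMap.mulLeft ℂ e ∘ₗ LinearMap.mulRight ℂ f) ≤
        Submodule.span ℂ {y} := by
      rintro _ ⟨x, rfl⟩
      obtain ⟨c, hc⟩ := hy x
      exact Submodule.mem_span_singleton.2 ⟨c, by simp [← hc, mul_assoc]⟩
    exact Module.Finite.iff_fg.1 (Submodule.finiteDimensional_of_le hle)
  | zero_left => simp
  | zero_right => simp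
  | add_left a a' b _ _ _ ha ha' =>
    have : LinearMap.mulLeft ℂ (a + a') = LinearMap.mulLeft ℂ a + LinearMap.mulLeft ℂ a' :=
      map_add (LinearMap.mul ℂ R) a a'
    rw [this, LinearMap.add_comp]
    exact ha.add ha'
  | add_right a b b' _ _ _ hb hb' =>
    have : LinearMap.mulRight ℂ (b + b') = LinearMap.mulRight ℂ b + LinearMap.mulRight ℂ b' :=
      map_add (LinearMap.mul ℂ R).flip b b'
    rw [this, LinearMap.comp_add]
    exact hb.add hb'
  | smul_left c a b _ _ h =>
    have : LinearMap.mulLeft ℂ (c • a) = c • LinearMap.mulLeft ℂ a :=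
      map_smul (LinearMap.mul ℂ R) c a
    rw [this, LinearMap.smul_comp]
    exact h.smul c
  | smul_right c a b _ _ h =>
    have : LinearMap.mulRight ℂ (c • b) = c • LinearMap.mulRight ℂ b :=
      map_smul (LinearMap.mul ℂ R).flip c b
    rw [this, LinearMap.comp_smul]
    exact h.smul c

theorem IsBaerStarRing.exists_central_isStarProjection (hA : IsBaerStarRing A)
    (halg : ∀ x : A, IsAlgebraic ℂ x) :
    ∃ h : A, IsStarProjection h ∧ (∀ x y, Commute (h * x) y) ∧
      (LinearMap.mulLeft ℂ (1 - h)).HasFiniteRange := by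
  obtain ⟨h, hh, hmax⟩ := hA.exists_largest_isReducedProjection
  have hproper := hA.hasProperInvolution
  have hproj := hh.toIsStarProjection
  refine ⟨h, hproj, hh.commute_mul hproper halg, ?_⟩
  have hmem := (hA.isOrthogonallyFinite_one_sub halg hproj hmax).mem_span_isScalarProjection
    hproper halg hproj.one_sub
  have hcomp : LinearMap.mulLeft ℂ (1 - h) ∘ₗ LinearMap.mulRight ℂ (1 - h) =
      LinearMap.mulLeft ℂ (1 - h) := LinearMap.ext fun x => by
    have hcomm : Commute (1 - h) x := (Commute.one_left x).sub_left (hh.commute x)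
    change (1 - h) * (x * (1 - h)) = (1 - h) * x
    rw [← hcomm.eq, ← mul_assoc, hproj.one_sub.isIdempotentElem.eq]
  rw [← hcomp]
  exact hproper.hasFiniteRange_mulLeft_comp_mulRight hmem hmem

end AlgebraicBaer

/-! ### Algebraic elements in AW*-algebras with finite-dimensional noncommutative part -/

section CommutingAlgebraic

open scoped IsMulCommutative

variable {K A : Type*} [Field K] [Ring A] [Algebra K A]

theorem isAlgebraic_add_and_mul_of_commute {a b : A} (hab : Commute a b) (ha : IsAlgebraic K a)
    (hb : IsAlgebraic K b) : IsAlgebraic K (a + b) ∧ IsAlgebraic K (a * b) := by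
  let S := Algebra.adjoin K {a, b}
  have : IsMulCommutative S := Algebra.isMulCommutative_adjoin K <| by
    rintro x (rfl | rfl) y (rfl | rfl) <;> first | rfl | exact hab | exact hab.symm
  have algebraic_coe {x : S} : IsAlgebraic K (x : A) ↔ IsAlgebraic K x :=
    isAlgebraic_algHom_iff S.val Subtype.val_injective
  let a' : S := ⟨a, Algebra.subset_adjoin (by simp)⟩
  let b' : S := ⟨b, Algebra.subset_adjoin (by simp)⟩
  have ha' : IsAlgebraic K a' := algebraic_coe.1 ha
  have hb' : IsAlgebraic K b' := algebraic_coe.1 hb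
  exact ⟨algebraic_coe.2 (ha'.add hb'), algebraic_coe.2 (ha'.mul hb')⟩

theorem isAlgebraic_of_isIdempotentElem {e : A} (he : IsIdempotentElem e) : IsAlgebraic K e :=
  ⟨X * (X - C 1), mul_ne_zero X_ne_zero (X_sub_C_ne_zero 1), by simp [mul_sub, he.eq]⟩

theorem isAlgebraic_mul_of_finite_range_mulLeft {a : A}
    (ha : (LinearMap.mulLeft K a).HasFiniteRange) (x : A) : IsAlgebraic K (a * x) := by
  have : Module.Finite K (LinearMap.mulLeft K a).range := Module.Finite.iff_fg.2 ha
  by_contra htrans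
  let φ : K[X] →ₗ[K] (LinearMap.mulLeft K a).range :=
    (LinearMap.mulLeft K a).rangeRestrict ∘ₗ LinearMap.mulLeft K x ∘ₗ (aeval (a * x)).toLinearMap
  have φ_apply (p : K[X]) : (φ p : A) = aeval (a * x) (X * p) := by simp [φ, mul_assoc]
  refine Polynomial.not_finite (Module.Finite.of_injective φ ?_)
  refine (injective_iff_map_eq_zero φ).2 fun p hp => ?_
  have : X * p = 0 := transcendental_iff.1 htrans _ (by rw [← φ_apply, hp]; rfl)
  simpa using this

end CommutingAlgebraic

theorem isAlgebraic_star {K A : Type*} [CommRing K] [StarRing K] [Ring A] [StarRing A] [Algebra K A]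
    [StarModule K A] {a : A} (ha : IsAlgebraic K a) : IsAlgebraic K (star a) := by
  obtain ⟨p, hp, hpa⟩ := ha
  refine ⟨p.map (starRingEnd K), ?_, ?_⟩
  · rwa [Polynomial.map_ne_zero_iff (f := starRingEnd K) star_injective]
  · have aeval_star (q : K[X]) : aeval (star a) (q.map (starRingEnd K)) = star (aeval a q) := by
      induction q using Polynomial.induction_on' with
      | add p q hp hq => simp only [Polynomial.map_add, map_add, hp, hq, star_add]
      | monomial k c =>
        simp only [map_monomial, aeval_monomial, ← Algebra.smul_def, star_smul, star_pow,
          starRingEnd_apply]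
    rw [aeval_star, hpa, star_zero]

section CentralProjection

variable {A : Type*} [Ring A] [StarRing A] [Algebra ℂ A] [StarModule ℂ A]

/-- The elements whose component under a central abelian projection `h` is algebraic. When
`(1 - h)A` is finite dimensional these are all the algebraic elements of `A`, and the dense
subalgebra of the theorem. -/
def algebraicUnder (h : A) (hh : IsStarProjection h) (hcentral : ∀ x, Commute h x)
    (hcomm : ∀ x y, Commute (h * x) (h * y)) : StarSubalgebra ℂ A where
  carrier := {x | IsAlgebraic ℂ (h * x)}
  mul_mem' {x y} hx hy := by
    have : h * (x * y) = (h * x) * (h * y) := by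
      rw [(hcentral x).eq, mul_assoc x, ← mul_assoc h h, hh.isIdempotentElem.eq, ← mul_assoc,
        (hcentral x).eq, mul_assoc]
    exact (this ▸ (isAlgebraic_add_and_mul_of_commute (hcomm x y) hx hy).2 :)
  add_mem' {x y} hx hy :=
    (mul_add h x y ▸ (isAlgebraic_add_and_mul_of_commute (hcomm x y) hx hy).1 :)
  algebraMap_mem' c := (isAlgebraic_add_and_mul_of_commute (hcentral _)
    (isAlgebraic_of_isIdempotentElem hh.isIdempotentElem) (isAlgebraic_algebraMap c)).2
  star_mem' {x} hx := by
    have : star (h * x) = h * star x := by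
      rw [star_mul, hh.isSelfAdjoint.star_eq, (hcentral _).eq]
    exact (this ▸ isAlgebraic_star hx :)

variable {h : A} (hh : IsStarProjection h) (hcentral : ∀ x, Commute h x)
  (hcomm : ∀ x y, Commute (h * x) (h * y))

theorem mem_algebraicUnder_of_isIdempotentElem {e : A} (he : IsIdempotentElem e) :
    e ∈ algebraicUnder h hh hcentral hcomm :=
  (isAlgebraic_add_and_mul_of_commute (hcentral e)
    (isAlgebraic_of_isIdempotentElem hh.isIdempotentElem) (isAlgebraic_of_isIdempotentElem he)).2

theorem isAlgebraic_of_mem_algebraicUnder (hfin : (LinearMap.mulLeft ℂ (1 - h)).HasFiniteRange)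
    (x : algebraicUnder h hh hcentral hcomm) : IsAlgebraic ℂ x := by
  obtain ⟨x, hx⟩ := x
  refine (isAlgebraic_algHom_iff (algebraicUnder h hh hcentral hcomm).subtype.toAlgHom
    Subtype.val_injective).1 ?_
  have components_commute : Commute (h * x) ((1 - h) * x) := by
    rw [sub_mul, one_mul]
    exact ((hcentral x).mul_left (.refl x)).sub_right (.refl _)
  have := (isAlgebraic_add_and_mul_of_commute components_commute hx
    (isAlgebraic_mul_of_finite_range_mulLeft hfin x)).1
  rwa [← add_mul, add_sub_cancel, one_mul] at this

end CentralProjection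

theorem dense_of_forall_exists_norm_sub_le {E : Type*} [SeminormedAddCommGroup E]
    (M : AddSubgroup E) {r : ℝ} (hr : r < 1) (h : ∀ a : E, ∃ b ∈ M, ‖a - b‖ ≤ r * ‖a‖) :
    Dense (M : Set E) := by
  have contraction (a : E) : ‖(a : E ⧸ M)‖ ≤ r * ‖a‖ := by
    obtain ⟨b, hb, hab⟩ := h a
    have : ((a - b : E) : E ⧸ M) = a := QuotientAddGroup.eq_iff_sub_mem.2 (by simpa using hb)
    exact this ▸ QuotientAddGroup.norm_mk_le_norm.trans hab
  intro a
  refine QuotientAddGroup.norm_mk_eq_zero_iff_mem_closure.1 (le_antisymm ?_ (norm_nonneg _))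
  rcases le_or_gt r 0 with hr₀ | hr₀
  · exact (contraction a).trans (mul_nonpos_of_nonpos_of_nonneg hr₀ (norm_nonneg a))
  · have : ‖(a : E ⧸ M)‖ / r ≤ ‖(a : E ⧸ M)‖ := QuotientAddGroup.le_norm_iff.2 fun a' ha' =>
      (div_le_iff₀' hr₀).2 (ha' ▸ contraction a')
    rw [div_le_iff₀' hr₀] at this
    nlinarith

theorem IsBaerStarRing.exists_symmetry_mul_eq_posPart_add_negPart {𝒜 : Type*} [CStarAlgebra 𝒜]
    (hA : IsBaerStarRing 𝒜) {a : 𝒜} (ha : IsSelfAdjoint a) :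
    ∃ e : 𝒜, IsStarProjection e ∧ (2 * e - 1) * a = a⁺ + a⁻ := by
  obtain ⟨e, he, hann⟩ := isBaerStarRing_iff.1 hA {a⁻} (Set.singleton_nonempty _)
  simp only [Set.mem_singleton_iff, forall_eq] at hann
  have negPart_mul : a⁻ * e = 0 := (hann e).2 he.isIdempotentElem
  have mul_posPart : e * a⁺ = a⁺ := (hann a⁺).1 (CFC.negPart_mul_posPart a)
  have isSelfAdjoint_negPart : IsSelfAdjoint a⁻ := cfcₙ_predicate _ a
  have mul_negPart : e * a⁻ = 0 := by
    simpa [he.isSelfAdjoint.star_eq, isSelfAdjoint_negPart.star_eq] using congrArg star negPart_mul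
  refine ⟨e, he, ?_⟩
  calc (2 * e - 1) * a = (2 * e - 1) * (a⁺ - a⁻) := by rw [CFC.posPart_sub_negPart a]
    _ = 2 * (e * a⁺) - 2 * (e * a⁻) - a⁺ + a⁻ := by noncomm_ring
    _ = a⁺ + a⁻ := by rw [mul_posPart, mul_negPart]; noncomm_ring

theorem norm_posPart_add_negPart_sub_half_norm_le {𝒜 : Type*} [CStarAlgebra 𝒜] {a : 𝒜}
    (ha : IsSelfAdjoint a) : ‖a⁺ + a⁻ - algebraMap ℝ 𝒜 (‖a‖ / 2)‖ ≤ ‖a‖ / 2 := by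
  have : a⁺ + a⁻ - algebraMap ℝ 𝒜 (‖a‖ / 2) = cfc (fun t => |t| - ‖a‖ / 2) a := by
    rw [cfc_sub .., cfc_const .., CFC.posPart_def, CFC.negPart_def, ← cfcₙ_add .., cfcₙ_eq_cfc ..]
    simp only [posPart_add_negPart]
  rw [this]
  refine norm_cfc_le (by positivity) fun t ht => ?_
  have : |t| ≤ ‖a‖ := by simpa [cfc_id ℝ a] using norm_apply_le_norm_cfc (id : ℝ → ℝ) a ht
  rw [Real.norm_eq_abs, abs_le]
  constructor <;> linarith [abs_nonneg t]

theorem IsBaerStarRing.exists_norm_sub_smul_symmetry_le {𝒜 : Type*} [CStarAlgebra 𝒜]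
    (hA : IsBaerStarRing 𝒜) {a : 𝒜} (ha : IsSelfAdjoint a) :
    ∃ e : 𝒜, IsStarProjection e ∧ ‖a - (‖a‖ / 2) • (2 * e - 1)‖ ≤ ‖a‖ / 2 := by
  obtain ⟨e, he, hea⟩ := hA.exists_symmetry_mul_eq_posPart_add_negPart ha
  refine ⟨e, he, ?_⟩
  have unitary : 2 * e - 1 ∈ unitary 𝒜 := he.two_mul_sub_one_mem_unitary
  have symmetry_mul_self : (2 * e - 1) * (2 * e - 1) = 1 := by
    simpa [he.isSelfAdjoint.star_eq, mul_two, two_mul] using Unitary.star_mul_self_of_mem unitary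
  rw [← CStarRing.norm_mem_unitary_mul _ unitary, mul_sub, hea, mul_smul_comm, symmetry_mul_self,
    ← Algebra.algebraMap_eq_smul_one]
  exact norm_posPart_add_negPart_sub_half_norm_le ha

theorem IsBaerStarRing.dense_span_isStarProjection {𝒜 : Type*} [CStarAlgebra 𝒜]
    (hA : IsBaerStarRing 𝒜) : Dense (Submodule.span ℂ {e : 𝒜 | IsStarProjection e} : Set 𝒜) := by
  set M := Submodule.span ℂ {e : 𝒜 | IsStarProjection e}
  have mem {e : 𝒜} (he : IsStarProjection e) : e ∈ M := Submodule.subset_span he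
  have dense_selfAdjoint :
      Dense (M.toAddSubgroup.comap (selfAdjoint 𝒜).subtype : Set (selfAdjoint 𝒜)) := by
    refine dense_of_forall_exists_norm_sub_le _ one_half_lt_one fun a => ?_
    obtain ⟨e, he, hae⟩ := hA.exists_norm_sub_smul_symmetry_le a.2
    have isSelfAdjoint : IsSelfAdjoint (2 * e - 1) := by
      simp [IsSelfAdjoint, he.isSelfAdjoint.star_eq, two_mul]
    have mem_span : 2 * e - 1 ∈ M := two_mul e ▸ sub_mem (add_mem (mem he) (mem he)) (mem (.one 𝒜))
    exact ⟨(‖a‖ / 2) • ⟨2 * e - 1, isSelfAdjoint⟩,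
      M.smul_of_tower_mem (‖a‖ / 2) mem_span,
      by simpa [div_eq_inv_mul] using hae⟩
  have mem_closure (a : selfAdjoint 𝒜) : (a : 𝒜) ∈ M.topologicalClosure :=
    map_mem_closure continuous_subtype_val (dense_selfAdjoint a) fun _ => id
  intro x
  rw [← realPart_add_I_smul_imaginaryPart x]
  exact add_mem (mem_closure _) (M.topologicalClosure.smul_mem _ (mem_closure _))

theorem IsBaerStarRing.exists_dense_algebraic {𝒜 : Type*} [CStarAlgebra 𝒜]
    (hA : IsBaerStarRing 𝒜) {h : 𝒜} (hh : IsStarProjection h) (hcentral : ∀ x, Commute h x)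
    (hcomm : ∀ x y, Commute (h * x) (h * y))
    (hfin : (LinearMap.mulLeft ℂ (1 - h)).HasFiniteRange) :
    ∃ B : StarSubalgebra ℂ 𝒜, Dense (B : Set 𝒜) ∧ (∀ b : B, IsAlgebraic ℂ b) ∧
      IsBaerStarRing B := by
  have mem {e : 𝒜} (he : IsStarProjection e) : e ∈ algebraicUnder h hh hcentral hcomm :=
    mem_algebraicUnder_of_isIdempotentElem hh hcentral hcomm he.isIdempotentElem
  refine ⟨algebraicUnder h hh hcentral hcomm, ?_,
    isAlgebraic_of_mem_algebraicUnder hh hcentral hcomm hfin,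
    hA.of_forall_isStarProjection_mem fun _ => mem⟩
  let M := Subalgebra.toSubmodule (algebraicUnder h hh hcentral hcomm).toSubalgebra
  exact hA.dense_span_isStarProjection.mono (Submodule.span_le (p := M).2 fun _ => mem)

/-! ### C*-algebras with a dense algebraic Baer `*`-subalgebra -/

theorem IsBaerStarRing.of_dvd_isStarProjection_approximation {R 𝒜 : Type*} [CommSemiring R]
    [StarRing R] [Ring 𝒜] [StarRing 𝒜] [Algebra R 𝒜] [StarModule R 𝒜] [TopologicalSpace 𝒜]
    [T2Space 𝒜] [ContinuousMul 𝒜] [ContinuousStar 𝒜] {B : StarSubalgebra R 𝒜}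
    (hB : IsBaerStarRing B)
    (happrox : ∀ y, y ∈ closure ((· * y) '' {q | q ∈ B ∧ IsStarProjection q ∧ y ∣ q})) :
    IsBaerStarRing 𝒜 := by
  refine isBaerStarRing_iff.2 fun S hS => ?_
  obtain ⟨s₀, hs₀⟩ := hS
  let P : Set B := {p | ∃ s ∈ S, star s ∣ (p : 𝒜) ∧ IsStarProjection (p : 𝒜)}
  obtain ⟨f, hf, hann⟩ := isBaerStarRing_iff.1 hB P ⟨0, s₀, hs₀, dvd_zero _, .zero 𝒜⟩
  refine ⟨f, hf.map B.subtype, fun y => ⟨fun hy => ?_, fun hy s hs => ?_⟩⟩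
  · refine (isClosed_eq (by fun_prop) continuous_id).closure_subset_iff.2 ?_ (happrox y)
    rintro _ ⟨q, ⟨hqB, -, z, hz⟩, rfl⟩
    have hfq : f * ⟨q, hqB⟩ = ⟨q, hqB⟩ := by
      refine (hann _).1 ?_
      rintro p ⟨s, hs, ⟨w, hw⟩, hp⟩
      refine Subtype.ext ?_
      have : (p : 𝒜) = star w * s := by
        rw [← hp.isSelfAdjoint.star_eq, hw, star_mul, star_star]
      change (p : 𝒜) * q = 0
      rw [this, hz, mul_assoc, ← mul_assoc s, hy s hs, zero_mul, mul_zero]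
    change (f : 𝒜) * (q * y) = q * y
    rw [← mul_assoc]
    exact congrArg (· * y) (congrArg Subtype.val hfq)
  · suffices star s ∈ {x : 𝒜 | star x * f = 0} by
      rw [← hy, ← mul_assoc]
      simpa using congrArg (· * y) this
    refine (isClosed_eq (by fun_prop) continuous_const).closure_subset_iff.2 ?_ (happrox (star s))
    rintro _ ⟨q, ⟨hqB, hq, hdvd⟩, rfl⟩
    have hqf : q * f = 0 :=
      congrArg Subtype.val ((hann f).2 hf.isIdempotentElem ⟨q, hqB⟩ ⟨s, hs, hdvd, hq⟩)
    simp [hq.isSelfAdjoint.star_eq, mul_assoc, hqf]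

theorem finite_spectrum_of_isAlgebraic {K A : Type*} [Field K] [Ring A] [Algebra K A] {a : A}
    (ha : IsAlgebraic K a) : (spectrum K a).Finite := by
  rcases subsingleton_or_nontrivial A with _ | _
  · simp [spectrum.of_subsingleton]
  obtain ⟨p, hp, hpa⟩ := ha
  refine (finite_setOfPred_isRoot hp).subset fun z hz => ?_
  have : p.eval z ∈ spectrum K (aeval a p) := spectrum.subset_polynomial_aeval a p ⟨z, hz, rfl⟩
  rwa [hpa, spectrum.zero_eq] at this

theorem cfc_mem_of_isAlgebraic {𝒜 : Type*} [CStarAlgebra 𝒜] {B : StarSubalgebra ℂ 𝒜} {a : 𝒜}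
    (haB : a ∈ B) (ha : IsSelfAdjoint a) (halg : IsAlgebraic ℂ a) (f : ℝ → ℝ) : cfc f a ∈ B := by
  let S := StarAlgebra.adjoin ℂ {a}
  have toSubalgebra_eq : S.toSubalgebra = Algebra.adjoin ℂ {a} := by
    rw [StarAlgebra.adjoin_toSubalgebra, Set.star_singleton, ha.star_eq, Set.union_self]
  have : FiniteDimensional ℂ (Subalgebra.toSubmodule S.toSubalgebra) :=
    Module.Finite.iff_fg.2 (toSubalgebra_eq ▸ halg.isIntegral.fg_adjoin_singleton)
  have : IsClosed (S : Set 𝒜) := (Subalgebra.toSubmodule S.toSubalgebra).closed_of_finiteDimensional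
  exact StarAlgebra.adjoin_le (Set.singleton_subset_iff.2 haB)
    (cfc_mem f (StarAlgebra.self_mem_adjoin_singleton ℂ a))

theorem exists_cfc_cutoff {𝒜 : Type*} [CStarAlgebra 𝒜] {a : 𝒜} (ha : IsSelfAdjoint a)
    (hfin : (spectrum ℝ a).Finite) {ε : ℝ} (hε : 0 < ε) :
    ∃ χ u : ℝ → ℝ, IsStarProjection (cfc χ a) ∧ IsSelfAdjoint (cfc u a) ∧
      Commute a (cfc χ a) ∧ a * cfc u a = cfc χ a ∧ cfc u a * cfc χ a = cfc u a ∧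
      ‖cfc u a‖ ≤ ε⁻¹ ∧ ‖a - cfc χ a * a‖ ≤ ε := by
  have hcont (f : ℝ → ℝ) : ContinuousOn f (spectrum ℝ a) := hfin.continuousOn f
  let χ : ℝ → ℝ := fun t => if ε ≤ |t| then 1 else 0
  let u : ℝ → ℝ := fun t => if ε ≤ |t| then t⁻¹ else 0
  have χ_mul_self : cfc χ a * cfc χ a = cfc χ a := by
    rw [← cfc_mul χ χ a (hcont _) (hcont _)]
    congr! 2 with t
    simp [χ]
  have mul_u : a * cfc u a = cfc χ a := by
    nth_rw 1 [← cfc_id' ℝ a]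
    rw [← cfc_mul _ u a (hcont _) (hcont _)]
    congr! 2 with t
    by_cases ht : ε ≤ |t|
    · simp [u, χ, ht, abs_pos.1 (hε.trans_le ht)]
    · simp [u, χ, ht]
  have u_mul_χ : cfc u a * cfc χ a = cfc u a := by
    rw [← cfc_mul u χ a (hcont _) (hcont _)]
    congr! 2 with t
    by_cases ht : ε ≤ |t| <;> simp [u, χ, ht]
  have commute_χ : Commute a (cfc χ a) := by
    simpa only [cfc_id' ℝ a] using cfc_commute_cfc (fun t => t) χ a
  have norm_u : ‖cfc u a‖ ≤ ε⁻¹ := by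
    refine norm_cfc_le (by positivity) fun t _ => ?_
    by_cases ht : ε ≤ |t|
    · simpa [u, ht] using inv_anti₀ hε ht
    · simpa [u, ht] using hε.le
  have norm_tail : ‖a - cfc χ a * a‖ ≤ ε := by
    have : a - cfc χ a * a = cfc (fun t => t - χ t * t) a := by
      rw [cfc_sub _ _ a (hcont _) (hcont _), cfc_mul _ _ a (hcont _) (hcont _), cfc_id' ℝ a]
    rw [this]
    refine norm_cfc_le hε.le fun t _ => ?_
    by_cases ht : ε ≤ |t|
    · simpa [χ, ht] using hε.le
    · simpa [χ, ht] using (not_le.1 ht).le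
  exact ⟨χ, u, ⟨χ_mul_self, cfc_predicate χ a⟩, cfc_predicate u a, commute_χ, mul_u,
    u_mul_χ, norm_u, norm_tail⟩

theorem exists_isStarProjection_cutoff {𝒜 : Type*} [CStarAlgebra 𝒜] {B : StarSubalgebra ℂ 𝒜}
    {b : 𝒜} (hb : b ∈ B) (halg : IsAlgebraic ℂ (b * star b)) {δ : ℝ} (hδ : 0 < δ) :
    ∃ q ∈ B, IsStarProjection q ∧ (∃ k, b * k = q ∧ k * q = k ∧ ‖k‖ ≤ δ⁻¹) ∧
      ‖b - q * b‖ ≤ δ := by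
  have ha : IsSelfAdjoint (b * star b) := .mul_star_self b
  have haB : b * star b ∈ B := mul_mem hb (star_mem hb)
  have finite_spectrum : (spectrum ℝ (b * star b)).Finite := by
    rw [← spectrum.preimage_algebraMap ℂ]
    exact (finite_spectrum_of_isAlgebraic halg).preimage (algebraMap ℝ ℂ).injective.injOn
  obtain ⟨χ, u, hq, hu, commute, mul_u, u_mul, norm_u, norm_tail⟩ :=
    exists_cfc_cutoff ha finite_spectrum (pow_pos hδ 2)
  refine ⟨cfc χ (b * star b), cfc_mem_of_isAlgebraic haB ha halg χ, hq,
    ⟨star b * cfc u (b * star b), by rw [← mul_assoc, mul_u], by rw [mul_assoc, u_mul], ?_⟩, ?_⟩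
  · have : star (star b * cfc u (b * star b)) * (star b * cfc u (b * star b))
        = cfc u (b * star b) := by
      rw [star_mul, hu.star_eq, star_star, mul_assoc, ← mul_assoc b, mul_u, u_mul]
    refine le_of_sq_le_sq ?_ (by positivity)
    rwa [sq, ← CStarRing.norm_star_mul_self, this, inv_pow]
  · set q := cfc χ (b * star b)
    have : (b - q * b) * star (b - q * b) = (b * star b - q * (b * star b)) * (1 - q) := by
      rw [star_sub, star_mul, hq.isSelfAdjoint.star_eq]
      noncomm_ring
    refine le_of_sq_le_sq ?_ hδ.le
    rw [sq, ← CStarRing.norm_self_mul_star, this]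
    calc ‖(b * star b - q * (b * star b)) * (1 - q)‖
        ≤ ‖b * star b - q * (b * star b)‖ * ‖1 - q‖ := norm_mul_le _ _
      _ ≤ δ ^ 2 * 1 := by gcongr; exact hq.one_sub.norm_le
      _ = δ ^ 2 := mul_one _

theorem add_dvd_of_norm_lt_one {R : Type*} [NormedRing R] [CompleteSpace R] {b d k q : R}
    (hbk : b * k = q) (hkq : k * q = k) (hcomm : Commute (d * k) q) (hnorm : ‖d * k‖ < 1) :
    b + d ∣ q := by
  have isUnit : IsUnit (1 + d * k) := by
    simpa using isUnit_one_sub_of_norm_lt_one (x := -(d * k)) (by rwa [norm_neg])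
  have factor : (b + d) * k = q * (1 + d * k) := by
    rw [add_mul, hbk, mul_add, mul_one, ← hcomm.eq, mul_assoc, hkq]
  exact isUnit.dvd_mul_right.1 ⟨k, factor.symm⟩

theorem mem_closure_mul_of_commute_sub {𝒜 : Type*} [CStarAlgebra 𝒜] {B : StarSubalgebra ℂ 𝒜}
    (halg : ∀ b ∈ B, IsAlgebraic ℂ b) {y : 𝒜}
    (hy : ∀ ε > 0, ∃ b ∈ B, ‖y - b‖ < ε ∧ ∀ x z, Commute ((y - b) * x) z) :
    y ∈ closure ((· * y) '' {q | q ∈ B ∧ IsStarProjection q ∧ y ∣ q}) := by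
  refine Metric.mem_closure_iff.2 fun ε hε => ?_
  obtain ⟨b, hb, hyb, hcomm⟩ := hy (ε / 2) (half_pos hε)
  obtain ⟨q, hqB, hq, ⟨k, hbk, hkq, hk⟩, hbq⟩ :=
    exists_isStarProjection_cutoff hb (halg _ (mul_mem hb (star_mem hb))) (half_pos hε)
  have norm_lt_one : ‖(y - b) * k‖ < 1 :=
    calc ‖(y - b) * k‖ ≤ ‖y - b‖ * ‖k‖ := norm_mul_le _ _
      _ ≤ ‖y - b‖ * (ε / 2)⁻¹ := by gcongr
      _ < ε / 2 * (ε / 2)⁻¹ := by gcongr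
      _ = 1 := mul_inv_cancel₀ (half_pos hε).ne'
  have dvd : y ∣ q := by
    simpa using add_dvd_of_norm_lt_one hbk hkq (hcomm k q) norm_lt_one
  refine ⟨q * y, ⟨q, ⟨hqB, hq, dvd⟩, rfl⟩, ?_⟩
  rw [dist_eq_norm]
  calc ‖y - q * y‖ = ‖(1 - q) * (y - b) + (b - q * b)‖ := by congr 1; noncomm_ring
    _ ≤ ‖1 - q‖ * ‖y - b‖ + ‖b - q * b‖ := norm_add_le_of_le (norm_mul_le _ _) le_rfl
    _ ≤ 1 * ‖y - b‖ + ε / 2 := by gcongr; exact hq.one_sub.norm_le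
    _ < ε := by linarith

theorem exists_mem_norm_sub_lt_and_commute_sub {𝒜 : Type*} [CStarAlgebra 𝒜]
    {B : StarSubalgebra ℂ 𝒜} (hdense : Dense (B : Set 𝒜)) {h : 𝒜} (hhB : h ∈ B)
    (hcentral : ∀ x z, Commute (h * x) z) {y : 𝒜} (hy : (1 - h) * y ∈ B) {ε : ℝ} (hε : 0 < ε) :
    ∃ b ∈ B, ‖y - b‖ < ε ∧ ∀ x z, Commute ((y - b) * x) z := by
  have isOpen : IsOpen {x | ‖h * (y - x)‖ < ε} := isOpen_lt (by fun_prop) continuous_const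
  obtain ⟨x, hxB, hx⟩ := hdense.exists_mem_open isOpen ⟨y, by simpa using hε⟩
  have sub_eq : y - (h * x + (1 - h) * y) = h * (y - x) := by noncomm_ring
  refine ⟨h * x + (1 - h) * y, add_mem (mul_mem hhB hxB) hy, sub_eq ▸ hx, fun w z => ?_⟩
  rw [sub_eq, mul_assoc]
  exact hcentral _ _

theorem commute_mul_of_dense {S A : Type*} [Mul A] [TopologicalSpace A] [T2Space A]
    [ContinuousMul A] [SetLike S A] [MulMemClass S A] {B : S} (hdense : Dense (B : Set A)) {h : B}
    (hcomm : ∀ x y : B, Commute (h * x) y) (x y : A) : Commute ((h : A) * x) y :=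
  hdense.denseRange_val.induction_on₂ (p := fun x y => (h : A) * x * y = y * (h * x))
    (isClosed_eq (by fun_prop) (by fun_prop)) (fun x y => congrArg Subtype.val (hcomm x y)) x y

theorem range_mulLeft_eq_map_of_dense {A : Type*} [Ring A] [StarRing A] [TopologicalSpace A]
    [T2Space A] [IsTopologicalRing A] [Algebra ℂ A] [ContinuousSMul ℂ A] [StarModule ℂ A]
    {B : StarSubalgebra ℂ A} (hdense : Dense (B : Set A)) {a : B}
    (hfin : (LinearMap.mulLeft ℂ a).HasFiniteRange) :
    (LinearMap.mulLeft ℂ (a : A)).range =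
      (LinearMap.mulLeft ℂ a).range.map B.subtype.toAlgHom.toLinearMap := by
  have : Module.Finite ℂ (LinearMap.mulLeft ℂ a).range := Module.Finite.iff_fg.2 hfin
  set V := (LinearMap.mulLeft ℂ a).range.map B.subtype.toAlgHom.toLinearMap
  refine le_antisymm ?_ ?_
  · rintro _ ⟨x, rfl⟩
    exact hdense.induction (P := fun x => (a : A) * x ∈ V) (fun x hx => ⟨_, ⟨⟨x, hx⟩, rfl⟩, rfl⟩)
      (V.closed_of_finiteDimensional.preimage (by fun_prop)) x
  · rintro _ ⟨_, ⟨x, rfl⟩, rfl⟩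
    exact ⟨x, rfl⟩

theorem IsBaerStarRing.of_dense_algebraic {𝒜 : Type*} [CStarAlgebra 𝒜] {B : StarSubalgebra ℂ 𝒜}
    (hdense : Dense (B : Set 𝒜)) (halg : ∀ b : B, IsAlgebraic ℂ b) (hB : IsBaerStarRing B) :
    IsBaerStarRing 𝒜 ∧ ∃ h : 𝒜, IsStarProjection h ∧ (∀ x y, Commute (h * x) y) ∧
      (LinearMap.mulLeft ℂ (1 - h)).HasFiniteRange := by
  obtain ⟨h, hh, hcomm, hfin⟩ := hB.exists_central_isStarProjection halg
  have range_eq := range_mulLeft_eq_map_of_dense hdense hfin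
  have commute (x y : 𝒜) : Commute ((h : 𝒜) * x) y := commute_mul_of_dense hdense hcomm x y
  have complement_mem (y : 𝒜) : (1 - (h : 𝒜)) * y ∈ B := by
    obtain ⟨b, -, hb⟩ := range_eq.le ⟨y, rfl⟩
    exact (show (b : 𝒜) = (1 - h) * y from hb) ▸ b.2
  refine ⟨hB.of_dvd_isStarProjection_approximation fun y => ?_, h, hh.map B.subtype, commute, ?_⟩
  · exact mem_closure_mul_of_commute_sub
      (fun b hb => (halg ⟨b, hb⟩).algHom B.subtype.toAlgHom) fun ε hε =>
        exists_mem_norm_sub_lt_and_commute_sub hdense h.2 commute (complement_mem y) hε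
  · change (LinearMap.mulLeft ℂ ((1 - h : B) : 𝒜)).range.FG
    exact range_eq ▸ Submodule.FG.map _ hfin

/-- A unital C*-algebra `𝒜` contains a dense unital `*`-subalgebra that
is an algebraic Baer `*`-algebra iff `𝒜` is an AW*-algebra possessing a central projection
`h` such that `h𝒜` is commutative and `(1 − h)𝒜` is finite dimensional. -/
theorem exists_dense_algebraic_baer_starSubalgebra_iff (𝒜 : Type*) [NormedRing 𝒜]
    [StarRing 𝒜] [CStarRing 𝒜] [NormedAlgebra ℂ 𝒜] [CompleteSpace 𝒜] [StarModule ℂ 𝒜] :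
    (∃ B : StarSubalgebra ℂ 𝒜, Dense (B : Set 𝒜) ∧ (∀ b : B, IsAlgebraic ℂ b) ∧
        IsBaerStarRing B) ↔
      (IsBaerStarRing 𝒜 ∧ ∃ h : 𝒜, star h = h ∧ h * h = h ∧ (∀ x : 𝒜, h * x = x * h) ∧
        (∀ x y : 𝒜, (h * x) * (h * y) = (h * y) * (h * x)) ∧
        FiniteDimensional ℂ (LinearMap.range (LinearMap.mulLeft ℂ ((1 : 𝒜) - h)))) := by
  let _ : CStarAlgebra 𝒜 := {}
  constructor
  · rintro ⟨B, hdense, halg, hB⟩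
    obtain ⟨hA, h, hh, hcomm, hfin⟩ := IsBaerStarRing.of_dense_algebraic hdense halg hB
    exact ⟨hA, h, hh.isSelfAdjoint, hh.isIdempotentElem, fun x => by simpa using (hcomm 1 x).eq,
      fun x y => hcomm x (h * y), Module.Finite.iff_fg.2 hfin⟩
  · rintro ⟨hA, h, hstar, hidem, hcentral, hcomm, hfin⟩
    exact hA.exists_dense_algebraic ⟨hidem, hstar⟩ hcentral hcomm (Module.Finite.iff_fg.1 hfin)
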